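/- Over the field 𝔽₄₉ with 49 elements, the number of triples of points ([x:r], [y:s], [z:t]) ∈ ℙ¹(𝔽₄₉) × ℙ¹(𝔽₄₉) × ℙ¹(𝔽₄₉) at which the (2,2,2)-form (x²−r²)(y²−s²)(z²−t²) − (xyz + 3rst)² − (rst)² vanishes is exactly 2843. -/

import Mathlib

/-- The `(2,2,2)`-form `(x²−r²)(y²−s²)(z²−t²) − (xyz + 3rst)² − (rst)²` evaluated at
representatives `a = (x,r)`, `b = (y,s)`, `c = (z,t)`. -/
def MK3Form {K : Type*} [Field K] (a b c : Fin 2 → K) : K :=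
  (a 0 ^ 2 - a 1 ^ 2) * (b 0 ^ 2 - b 1 ^ 2) * (c 0 ^ 2 - c 1 ^ 2) -
    (a 0 * b 0 * c 0 + 3 * (a 1 * b 1 * c 1)) ^ 2 - (a 1 * b 1 * c 1) ^ 2

instance : Fact (Nat.Prime 7) := ⟨by norm_num⟩

/-!
For fixed `[x:r]` and `[y:s]` the form is a binary quadratic form in `(z, t)`, and it is nonzero as
soon as `30 ≠ 0` in the field. Hence the fibre of the surface over `([x:r], [y:s])` has `1 + χ(Δ)`
points, where `χ` is the quadratic character and `Δ` a quarter of the discriminant, and the number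
of points over `𝔽_q` is `(q + 1)² + ∑ χ(Δ)`. Fibres with `r = 0` or `s = 0` contribute
`2 ∑ χ(1 - x²)` to the character sum. Over `𝔽₄₉ = 𝔽₇(√-1)` this is `-2`, and the fibres with
`r = s = 1` contribute `345`, so that there are `2500 - 2 + 345 = 2843` points.
-/

open OnePoint

section ProjectiveLine

variable {K : Type*}

/-- Homogeneous coordinates on the projective line, viewed as `OnePoint K`: the chosen
representative is `(x, 1)` for a finite point `x` and `(1, 0)` for `∞`. -/
def homogeneousCoords [Zero K] [One K] (p : OnePoint K) : Fin 2 → K :=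
  p.elim ![1, 0] fun x ↦ ![x, 1]

lemma homogeneousCoords_infty [Zero K] [One K] :
    homogeneousCoords (∞ : OnePoint K) = ![1, 0] := rfl

lemma homogeneousCoords_coe [Zero K] [One K] (x : K) :
    homogeneousCoords (x : OnePoint K) = ![x, 1] := rfl

lemma homogeneousCoords_map {L : Type*} [NonAssocSemiring K] [NonAssocSemiring L]
    (f : K →+* L) (p : OnePoint K) :
    homogeneousCoords (p.map f) = f ∘ homogeneousCoords p := by
  ext i
  induction p using OnePoint.rec <;> fin_cases i <;> simp [homogeneousCoords]

lemma exists_smul_homogeneousCoords_eq_rep [DivisionRing K] [DecidableEq K] (p : OnePoint K) :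
    ∃ u : K, u ≠ 0 ∧ (equivProjectivization K p).rep = u • homogeneousCoords p := by
  have exists_unit (v : Fin 2 → K) (hv : v ≠ 0) :
      ∃ u : K, u ≠ 0 ∧ (Projectivization.mk K v hv).rep = u • v := by
    obtain ⟨u, hu⟩ := Projectivization.exists_smul_eq_mk_rep K v hv
    exact ⟨u, u.ne_zero, hu.symm⟩
  induction p using OnePoint.rec with
  | infty => exact exists_unit _ _
  | coe x => exact exists_unit _ _

lemma sum_onePoint [Fintype K] {M : Type*} [AddCommMonoid M] (f : OnePoint K → M) :
    ∑ p, f p = f ∞ + ∑ x : K, f x :=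
  Fintype.sum_option f

lemma card_onePoint [Fintype K] : Fintype.card (OnePoint K) = Fintype.card K + 1 :=
  Fintype.card_option

lemma card_filter_onePoint [Fintype K] (P : OnePoint K → Prop) [DecidablePred P] :
    Finset.card {p | P p} = (if P ∞ then 1 else 0) + Finset.card {x : K | P x} := by
  simp only [Finset.card_filter, sum_onePoint]

end ProjectiveLine

section BinaryQuadraticForm

variable {K : Type*} [Field K] [Fintype K] [DecidableEq K] {a b c : K}

lemma card_quadratic_roots (hK : ringChar K ≠ 2) (ha : a ≠ 0) :
    (Finset.card {x : K | a * (x * x) + b * x + c = 0} : ℤ) =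
      quadraticChar K (discrim a b c) + 1 := by
  have two_ne : (2 : K) ≠ 0 := Ring.two_ne_zero hK
  have : NeZero (2 : K) := ⟨two_ne⟩
  let completeSquare : K ≃ K :=
    (Equiv.mulLeft₀ (2 * a) (mul_ne_zero two_ne ha)).trans (Equiv.addRight b)
  rw [← quadraticChar_card_sqrts hK, Nat.cast_inj]
  refine Finset.card_equiv completeSquare fun x ↦ ?_
  simp [quadratic_eq_zero_iff_discrim_eq_sq ha, completeSquare, eq_comm]

lemma card_binaryQuadratic_zeros (hK : ringChar K ≠ 2) (h : ¬(a = 0 ∧ b = 0 ∧ c = 0)) :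
    (Finset.card {p : OnePoint K | a * homogeneousCoords p 0 ^ 2 +
      b * (homogeneousCoords p 0 * homogeneousCoords p 1) +
        c * homogeneousCoords p 1 ^ 2 = 0} : ℤ) = quadraticChar K (discrim a b c) + 1 := by
  rw [card_filter_onePoint]
  simp only [homogeneousCoords_infty, homogeneousCoords_coe, Matrix.cons_val_zero,
    Matrix.cons_val_one, one_pow, mul_one, mul_zero, add_zero, ne_eq, OfNat.ofNat_ne_zero,
    not_false_eq_true, zero_pow]
  by_cases ha : a = 0
  · subst ha
    by_cases hb : b = 0
    · have hc : c ≠ 0 := fun hc ↦ h ⟨rfl, hb, hc⟩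
      simp [hb, hc, discrim]
    · have root_iff (x : K) : b * x + c = 0 ↔ x = -c / b := by
        rw [eq_div_iff hb, eq_neg_iff_add_eq_zero, mul_comm]
      simp [root_iff, Finset.filter_eq', discrim, quadraticChar_sq_one' hb]
  · simp [ha, sq, card_quadratic_roots hK ha]

end BinaryQuadraticForm

namespace MK3Form

variable {K : Type*} [Field K]

lemma smul_smul_smul (u v w : K) (a b c : Fin 2 → K) :
    MK3Form (u • a) (v • b) (w • c) = (u * v * w) ^ 2 * MK3Form a b c := by
  simp only [MK3Form, Pi.smul_apply, smul_eq_mul]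
  ring

lemma map_comp {L : Type*} [Field L] (f : K →+* L) (a b c : Fin 2 → K) :
    MK3Form (f ∘ a) (f ∘ b) (f ∘ c) = f (MK3Form a b c) := by
  simp [MK3Form, map_ofNat f 3]

variable (K) in
/-- The zero locus of `MK3Form` in `ℙ¹ × ℙ¹ × ℙ¹`, with each `ℙ¹` encoded as `OnePoint K` so that
every point comes with explicit coordinates. -/
def zeros : Set (OnePoint K × OnePoint K × OnePoint K) :=
  {P | MK3Form (homogeneousCoords P.1) (homogeneousCoords P.2.1) (homogeneousCoords P.2.2) = 0}

variable (K) in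
lemma ncard_projectivization_zeros :
    Set.ncard {P : Projectivization K (Fin 2 → K) × Projectivization K (Fin 2 → K) ×
      Projectivization K (Fin 2 → K) | MK3Form P.1.rep P.2.1.rep P.2.2.rep = 0} =
    (zeros K).ncard := by
  classical
  let e := equivProjectivization K
  refine (Nat.card_congr <| (e.prodCongr (e.prodCongr e)).subtypeEquiv fun P ↦ ?_).symm
  obtain ⟨u, hu, rep_fst⟩ := exists_smul_homogeneousCoords_eq_rep P.1
  obtain ⟨v, hv, rep_snd⟩ := exists_smul_homogeneousCoords_eq_rep P.2.1
  obtain ⟨w, hw, rep_thd⟩ := exists_smul_homogeneousCoords_eq_rep P.2.2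
  simp [zeros, e, rep_fst, rep_snd, rep_thd, smul_smul_smul, hu, hv, hw]

lemma ncard_zeros_congr {L : Type*} [Field L] (e : K ≃+* L) :
    (zeros K).ncard = (zeros L).ncard := by
  let eP : OnePoint K ≃ OnePoint L := e.toEquiv.optionCongr
  refine Nat.card_congr <| (eP.prodCongr (eP.prodCongr eP)).subtypeEquiv fun P ↦ ?_
  have coords_map (p : OnePoint K) :
      homogeneousCoords (eP p) = e.toRingHom ∘ homogeneousCoords p :=
    homogeneousCoords_map e.toRingHom p
  change _ = 0 ↔ MK3Form (homogeneousCoords (eP P.1)) (homogeneousCoords (eP P.2.1))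
    (homogeneousCoords (eP P.2.2)) = 0
  rw [coords_map, coords_map, coords_map, map_comp, map_eq_zero]

/-- The coefficient of `z²` in `MK3Form a b (z, t)`. -/
def coeffZZ (a b : Fin 2 → K) : K :=
  (a 0 ^ 2 - a 1 ^ 2) * (b 0 ^ 2 - b 1 ^ 2) - (a 0 * b 0) ^ 2

/-- The coefficient of `z * t` in `MK3Form a b (z, t)`. -/
def coeffZT (a b : Fin 2 → K) : K :=
  -6 * (a 0 * b 0 * (a 1 * b 1))

/-- The coefficient of `t²` in `MK3Form a b (z, t)`. -/
def coeffTT (a b : Fin 2 → K) : K :=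
  -((a 0 ^ 2 - a 1 ^ 2) * (b 0 ^ 2 - b 1 ^ 2)) - 10 * (a 1 * b 1) ^ 2

lemma eq_binaryQuadratic (a b c : Fin 2 → K) :
    MK3Form a b c =
      coeffZZ a b * c 0 ^ 2 + coeffZT a b * (c 0 * c 1) + coeffTT a b * c 1 ^ 2 := by
  simp only [MK3Form, coeffZZ, coeffZT, coeffTT]
  ring

lemma not_coeffs_eq_zero (h30 : (30 : K) ≠ 0) (p q : OnePoint K) :
    ¬(coeffZZ (homogeneousCoords p) (homogeneousCoords q) = 0 ∧
      coeffZT (homogeneousCoords p) (homogeneousCoords q) = 0 ∧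
      coeffTT (homogeneousCoords p) (homogeneousCoords q) = 0) := by
  induction p using OnePoint.rec with
  | infty =>
    induction q using OnePoint.rec <;>
      simp [homogeneousCoords_infty, homogeneousCoords_coe, coeffZZ, coeffTT]
  | coe x =>
    induction q using OnePoint.rec with
    | infty => simp [homogeneousCoords_infty, homogeneousCoords_coe, coeffZZ]
    | coe y =>
      simp only [homogeneousCoords_coe, coeffZZ, coeffZT, coeffTT, Matrix.cons_val_zero,
        Matrix.cons_val_one]
      rintro ⟨hzz, hzt, htt⟩
      refine pow_ne_zero 2 h30 ?_
      linear_combination 15 * (x * y * hzt - 6 * hzz - 6 * htt)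

/-- A quarter of the discriminant of the quadratic form `(z, t) ↦ MK3Form a b (z, t)`. -/
def fiberDiscrim (a b : Fin 2 → K) : K :=
  9 * (a 0 * b 0 * (a 1 * b 1)) ^ 2 - coeffZZ a b * coeffTT a b

lemma discrim_coeffs (a b : Fin 2 → K) :
    discrim (coeffZZ a b) (coeffZT a b) (coeffTT a b) = 2 ^ 2 * fiberDiscrim a b := by
  simp only [discrim, fiberDiscrim, coeffZT]
  ring

lemma fiberDiscrim_infty_infty : fiberDiscrim (K := K) ![1, 0] ![1, 0] = 0 := by
  simp [fiberDiscrim, coeffZZ]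

lemma fiberDiscrim_infty_coe (y : K) : fiberDiscrim ![1, 0] ![y, 1] = 1 - y ^ 2 := by
  simp [fiberDiscrim, coeffZZ, coeffTT]

lemma fiberDiscrim_coe_infty (x : K) : fiberDiscrim ![x, 1] ![1, 0] = 1 - x ^ 2 := by
  simp [fiberDiscrim, coeffZZ, coeffTT]

lemma fiberDiscrim_coe_coe (x y : K) :
    fiberDiscrim ![x, 1] ![y, 1] =
      9 * (x ^ 2 * y ^ 2) + (1 - x ^ 2 - y ^ 2) * ((x ^ 2 - 1) * (y ^ 2 - 1) + 10) := by
  simp only [fiberDiscrim, coeffZZ, coeffTT, Matrix.cons_val_zero, Matrix.cons_val_one]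
  ring

section Finite

variable [Fintype K] [DecidableEq K]

lemma card_fiber (h30 : (30 : K) ≠ 0) (p q : OnePoint K) :
    (Finset.card {r : OnePoint K | MK3Form (homogeneousCoords p) (homogeneousCoords q)
      (homogeneousCoords r) = 0} : ℤ) =
    quadraticChar K (fiberDiscrim (homogeneousCoords p) (homogeneousCoords q)) + 1 := by
  have two_ne : (2 : K) ≠ 0 := fun h2 ↦ h30 (by linear_combination 15 * h2)
  have hchar : ringChar K ≠ 2 := fun h ↦ two_ne (by exact_mod_cast h ▸ ringChar.Nat.cast_ringChar)
  simp only [eq_binaryQuadratic]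
  rw [card_binaryQuadratic_zeros hchar (not_coeffs_eq_zero h30 p q), discrim_coeffs, map_mul,
    quadraticChar_sq_one' two_ne, one_mul]

lemma ncard_zeros_eq_sum_card_fiber :
    (zeros K).ncard = ∑ p : OnePoint K, ∑ q : OnePoint K,
      Finset.card {r : OnePoint K | MK3Form (homogeneousCoords p) (homogeneousCoords q)
        (homogeneousCoords r) = 0} := by
  simp only [zeros, Set.ncard_eq_toFinset_card', Set.toFinset_ofPred, Finset.card_filter,
    Fintype.sum_prod_type]

theorem ncard_zeros_eq_sum_quadraticChar (h30 : (30 : K) ≠ 0) :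
    ((zeros K).ncard : ℤ) = (Fintype.card K + 1) ^ 2 + 2 * ∑ x : K, quadraticChar K (1 - x ^ 2) +
      ∑ x : K, ∑ y : K, quadraticChar K
        (9 * (x ^ 2 * y ^ 2) + (1 - x ^ 2 - y ^ 2) * ((x ^ 2 - 1) * (y ^ 2 - 1) + 10)) := by
  rw [ncard_zeros_eq_sum_card_fiber]
  push_cast
  simp only [card_fiber h30, sum_onePoint, homogeneousCoords_infty, homogeneousCoords_coe,
    fiberDiscrim_infty_infty, fiberDiscrim_infty_coe, fiberDiscrim_coe_infty, fiberDiscrim_coe_coe,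
    Finset.sum_add_distrib, Finset.sum_const, Finset.card_univ, quadraticChar_zero,
    card_onePoint, nsmul_eq_mul]
  push_cast
  ring

end Finite

end MK3Form

/-- The field with 49 elements, in the computable form `𝔽₇(√-1)`. -/
abbrev F49 := QuadraticAlgebra (ZMod 7) (-1) 0

namespace F49

instance : Fact (∀ r : ZMod 7, r ^ 2 ≠ -1 + 0 * r) := ⟨by decide⟩

instance : Fintype F49 := Fintype.ofEquiv _ (QuadraticAlgebra.equivProd (-1) 0).symm

lemma card_eq : Fintype.card F49 = 49 := by
  rw [Fintype.card_congr (QuadraticAlgebra.equivProd (-1 : ZMod 7) 0), Fintype.card_prod,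
    ZMod.card]

-- `x ^ 24 = (x ^ 8) ^ 3 = (norm x) ^ 3`. Testing squares in `𝔽₇` instead of `𝔽₄₉` is what keeps
-- the evaluation of the character sums below cheap for the kernel.
lemma quadraticChar_eq_quadraticChar_norm (x : F49) :
    quadraticChar F49 x = quadraticChar (ZMod 7) x.norm := by
  decide +kernel +revert

lemma sum_quadraticChar_one_sub_sq : ∑ x : F49, quadraticChar F49 (1 - x ^ 2) = -1 := by
  simp only [quadraticChar_eq_quadraticChar_norm]
  decide +kernel

lemma sum_quadraticChar_fiberDiscrim :
    ∑ x : F49, ∑ y : F49, quadraticChar F49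
      (9 * (x ^ 2 * y ^ 2) + (1 - x ^ 2 - y ^ 2) * ((x ^ 2 - 1) * (y ^ 2 - 1) + 10)) = 345 := by
  simp only [quadraticChar_eq_quadraticChar_norm]
  decide +kernel

lemma ncard_zeros : (MK3Form.zeros F49).ncard = 2843 := by
  have h30 : (30 : F49) ≠ 0 := by decide
  rw [← Nat.cast_inj (R := ℤ), MK3Form.ncard_zeros_eq_sum_quadraticChar h30, card_eq,
    sum_quadraticChar_one_sub_sq, sum_quadraticChar_fiberDiscrim]
  norm_num

end F49

theorem stmt15_general (K : Type*) [Field K] (hK : Nat.card K = 49) :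
    Set.ncard {P : Projectivization K (Fin 2 → K) × Projectivization K (Fin 2 → K) ×
      Projectivization K (Fin 2 → K) | MK3Form P.1.rep P.2.1.rep P.2.2.rep = 0} = 2843 := by
  have : Finite K := Nat.finite_of_card_ne_zero (by simp [hK])
  let := Fintype.ofFinite K
  have hcard : Fintype.card K = Fintype.card F49 := by
    rw [← Nat.card_eq_fintype_card, hK, F49.card_eq]
  rw [MK3Form.ncard_projectivization_zeros,
    MK3Form.ncard_zeros_congr (FiniteField.ringEquivOfCardEq hcard), F49.ncard_zeros]

/-- point count in Proposition 4.3. The `(2,2,2)`-form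
`(x²−r²)(y²−s²)(z²−t²) − (xyz + 3rst)² − (rst)²` vanishes at exactly `2843` points of
`ℙ¹ × ℙ¹ × ℙ¹` over the field `𝔽₄₉` with `49 = 7²` elements. Since the form is homogeneous
of degree 2 in each pair of coordinates, its vanishing is independent of the chosen
representatives. -/
theorem stmt15 :
    Set.ncard {P : Projectivization (GaloisField 7 2) (Fin 2 → GaloisField 7 2) ×
        Projectivization (GaloisField 7 2) (Fin 2 → GaloisField 7 2) ×
        Projectivization (GaloisField 7 2) (Fin 2 → GaloisField 7 2) |
      MK3Form P.1.rep P.2.1.rep P.2.2.rep = 0} = 2843 := by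
  exact stmt15_general _ (GaloisField.card 7 2 two_ne_zero)
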